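/- Let 0 < k₁ < k₂ be real numbers. Then for every real number k, 1 − (√2/π) ∫_{k₁}^{k₂} q ((q²−k₁²)/(k₂²−q²))^{1/4} / (k²+q²) dq = ((k²+k₁²)/(k²+k₂²))^{1/4}. -/

import Mathlib

open intervalIntegral

/-- An antiderivative of `1/(1+u^4)`. -/
noncomputable def quartP (u : ℝ) : ℝ :=
  1 / (4 * Real.sqrt 2) * Real.log ((u ^ 2 + Real.sqrt 2 * u + 1) / (u ^ 2 - Real.sqrt 2 * u + 1))
    + 1 / (2 * Real.sqrt 2) *
      (Real.arctan (Real.sqrt 2 * u + 1) + Real.arctan (Real.sqrt 2 * u - 1))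

lemma quartP_zero : quartP 0 = 0 := by
  simp [quartP, Real.arctan_neg]

lemma quartP_deriv (u : ℝ) : HasDerivAt quartP (1 / (1 + u ^ 4)) u := by
  have hs : Real.sqrt 2 ^ 2 = 2 := Real.sq_sqrt (by norm_num)
  have hs0 : 0 < Real.sqrt 2 := by positivity
  unfold quartP
  set s := Real.sqrt 2 with hsdef
  have hp : 0 < u ^ 2 + s * u + 1 := by nlinarith [sq_nonneg (u + s / 2)]
  have hm : 0 < u ^ 2 - s * u + 1 := by nlinarith [sq_nonneg (u - s / 2)]
  have h1 : HasDerivAt (fun u : ℝ => u ^ 2 + s * u + 1) (2 * u + s) u := by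
    have h0 : HasDerivAt (fun u : ℝ => u ^ 2) (2 * u) u := by simpa using hasDerivAt_pow 2 u
    have h00 : HasDerivAt (fun u : ℝ => s * u) s u := by
      simpa using (hasDerivAt_id u).const_mul s
    exact (h0.add h00).add_const 1
  have h2 : HasDerivAt (fun u : ℝ => u ^ 2 - s * u + 1) (2 * u - s) u := by
    have h0 : HasDerivAt (fun u : ℝ => u ^ 2) (2 * u) u := by simpa using hasDerivAt_pow 2 u
    have h00 : HasDerivAt (fun u : ℝ => s * u) s u := by
      simpa using (hasDerivAt_id u).const_mul s
    exact (h0.sub h00).add_const 1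
  have h3 : HasDerivAt (fun u : ℝ => s * u + 1) s u := by
    simpa using ((hasDerivAt_id u).const_mul s).add_const 1
  have h4 : HasDerivAt (fun u : ℝ => s * u - 1) s u := by
    simpa using ((hasDerivAt_id u).const_mul s).sub_const 1
  have h5 := (((h1.div h2 hm.ne').log (div_pos hp hm).ne').const_mul (1 / (4 * s))).add
    ((h3.arctan.add h4.arctan).const_mul (1 / (2 * s)))
  refine h5.congr_deriv ?_
  have e1 : 1 + (s * u + 1) ^ 2 = 2 * (u ^ 2 + s * u + 1) := by linear_combination u ^ 2 * hs
  have e2 : 1 + (s * u - 1) ^ 2 = 2 * (u ^ 2 - s * u + 1) := by linear_combination u ^ 2 * hs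
  have e3 : 1 + u ^ 4 = (u ^ 2 + s * u + 1) * (u ^ 2 - s * u + 1) := by
    linear_combination u ^ 2 * hs
  simp only [Pi.div_apply]
  rw [e1, e2, e3]
  have e4 : (2 * u + s) * (u ^ 2 - s * u + 1) - (u ^ 2 + s * u + 1) * (2 * u - s)
      = 2 * s * (1 - u ^ 2) := by ring
  have e5 : (u ^ 2 + s * u + 1) + (u ^ 2 - s * u + 1) = 2 * (1 + u ^ 2) := by ring
  rw [e4]
  clear e1 e2 e3 e4 h5 h1 h2
  generalize u ^ 2 + s * u + 1 = X at *
  generalize u ^ 2 - s * u + 1 = Y at *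
  have hp' := hp.ne'
  have hm' := hm.ne'
  field_simp
  linear_combination 4 * e5

lemma quartP_tendsto :
    Filter.Tendsto quartP Filter.atTop (nhds (Real.pi / (2 * Real.sqrt 2))) := by
  have hs0 : 0 < Real.sqrt 2 := by positivity
  unfold quartP
  set s := Real.sqrt 2 with hsdef
  have hl : Filter.Tendsto (fun u : ℝ => (u ^ 2 + s * u + 1) / (u ^ 2 - s * u + 1))
      Filter.atTop (nhds 1) := by
    have hi : Filter.Tendsto (fun u : ℝ => u⁻¹) Filter.atTop (nhds 0) := tendsto_inv_atTop_zero
    have h := ((hi.const_mul s).const_add 1).add (hi.pow 2)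
    have h' := ((hi.const_mul s).const_sub 1).add (hi.pow 2)
    have h2 := h.div h' (by norm_num)
    have e : (1 + s * 0 + (0:ℝ) ^ 2) / (1 - s * 0 + 0 ^ 2) = 1 := by norm_num
    rw [e] at h2
    refine h2.congr' ?_
    filter_upwards [Filter.eventually_gt_atTop 0] with u hu
    have e1 : u ^ 2 + s * u + 1 = u ^ 2 * (1 + s * u⁻¹ + u⁻¹ ^ 2) := by field_simp
    have e2 : u ^ 2 - s * u + 1 = u ^ 2 * (1 - s * u⁻¹ + u⁻¹ ^ 2) := by field_simp
    rw [e1, e2, mul_div_mul_left _ _ (by positivity)]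
    rfl
  have hlog := (hl.log one_ne_zero).const_mul (1 / (4 * s))
  have hmul : Filter.Tendsto (fun u : ℝ => s * u) Filter.atTop Filter.atTop :=
    Filter.tendsto_id.const_mul_atTop hs0
  have hat := Real.tendsto_arctan_atTop.mono_right nhdsWithin_le_nhds
  have ha1 := hat.comp (Filter.tendsto_atTop_add_const_right _ 1 hmul)
  have ha2 := hat.comp (Filter.tendsto_atTop_add_const_right _ (-1) hmul)
  have := hlog.add ((ha1.add ha2).const_mul (1 / (2 * s)))
  have e : Real.pi / (2 * s) =
      1 / (4 * s) * Real.log 1 + 1 / (2 * s) * (Real.pi / 2 + Real.pi / 2) := by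
    rw [Real.log_one]
    field_simp
    ring
  rw [e]
  exact this

lemma integral_of_tendsto_nonneg {a b fa fb : ℝ} (hab : a < b) {f f' : ℝ → ℝ}
    (hd : ∀ x ∈ Set.Ioo a b, HasDerivAt f (f' x) x) (hpos : ∀ x ∈ Set.Ioo a b, 0 ≤ f' x)
    (ha : Filter.Tendsto f (nhdsWithin a (Set.Ioi a)) (nhds fa))
    (hb : Filter.Tendsto f (nhdsWithin b (Set.Iio b)) (nhds fb)) :
    ∫ x in a..b, f' x = fb - fa := by
  have hcf : ContinuousOn f (Set.Ioo a b) := fun x hx =>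
    (hd x hx).continuousAt.continuousWithinAt
  have hc := continuousOn_Icc_extendFrom_Ioo hcf ha hb
  have hd' : ∀ x ∈ Set.Ioo a b, HasDerivAt (extendFrom (Set.Ioo a b) f) (f' x) x := by
    intro x hx
    refine (hd x hx).congr_of_eventuallyEq ?_
    filter_upwards [isOpen_Ioo.mem_nhds hx] with y hy
    exact extendFrom_eq (subset_closure hy) (hcf y hy)
  have hint : IntervalIntegrable f' MeasureTheory.volume a b := by
    rw [intervalIntegrable_iff_integrableOn_Ioc_of_le hab.le]
    exact integrableOn_deriv_of_nonneg hc hd' hpos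
  exact integral_eq_sub_of_hasDerivAt_of_tendsto hab hd hint ha hb

/-- The spectral representation of the wave function of the elliptic one-gap potential
at `x = 0`: for `0 < k₁ < k₂` and every real `k`,
`1 − (√2/π) ∫_{k₁}^{k₂} q((q²−k₁²)/(k₂²−q²))^{1/4}/(k²+q²) dq = ((k²+k₁²)/(k²+k₂²))^{1/4}`. -/
theorem spectral_representation_one_gap (k₁ k₂ : ℝ) (hk₁ : 0 < k₁) (hk : k₁ < k₂) :
    ∀ k : ℝ,
      1 - Real.sqrt 2 / Real.pi *
          ∫ q in k₁..k₂,
            q * ((q ^ 2 - k₁ ^ 2) / (k₂ ^ 2 - q ^ 2)) ^ ((1 : ℝ) / 4) / (k ^ 2 + q ^ 2) =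
        ((k ^ 2 + k₁ ^ 2) / (k ^ 2 + k₂ ^ 2)) ^ ((1 : ℝ) / 4) := by
  intro k
  have hk₂ : 0 < k₂ := hk₁.trans hk
  have hA : 0 < k ^ 2 + k₁ ^ 2 := by positivity
  have hB : 0 < k ^ 2 + k₂ ^ 2 := by positivity
  have hAB : 0 < (k ^ 2 + k₁ ^ 2) / (k ^ 2 + k₂ ^ 2) := div_pos hA hB
  have pow4 : ∀ x : ℝ, 0 ≤ x → (x ^ ((1 : ℝ) / 4)) ^ 4 = x := by
    intro x hx
    rw [← Real.rpow_natCast, ← Real.rpow_mul hx]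
    norm_num
  set r := ((k ^ 2 + k₁ ^ 2) / (k ^ 2 + k₂ ^ 2)) ^ ((1 : ℝ) / 4) with hr
  have hr0 : 0 < r := Real.rpow_pos_of_pos hAB _
  have hr4 : r ^ 4 = (k ^ 2 + k₁ ^ 2) / (k ^ 2 + k₂ ^ 2) := pow4 _ hAB.le
  let w : ℝ → ℝ := fun q => (q ^ 2 - k₁ ^ 2) / (k₂ ^ 2 - q ^ 2)
  let G : ℝ → ℝ := fun u => 2 * (quartP u - r * quartP (u / r))
  have hG : ∀ u, HasDerivAt G (2 * (1 / (1 + u ^ 4) - 1 / (1 + (u / r) ^ 4))) u := by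
    intro u
    have h1 := (quartP_deriv (u / r)).comp u ((hasDerivAt_id u).div_const r)
    have h2 := ((quartP_deriv u).sub (h1.const_mul r)).const_mul 2
    refine h2.congr_deriv ?_
    have : (1 + (u / r) ^ 4) ≠ 0 := by positivity
    field_simp
  have hGtop : Filter.Tendsto G Filter.atTop
      (nhds (2 * (Real.pi / (2 * Real.sqrt 2) - r * (Real.pi / (2 * Real.sqrt 2))))) := by
    have h1 := quartP_tendsto.comp (Filter.tendsto_id.atTop_div_const hr0)
    exact (quartP_tendsto.sub (h1.const_mul r)).const_mul 2
  have hG0 : G 0 = 0 := by simp [G, quartP_zero]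
  have key : ∫ q in k₁..k₂,
      q * ((q ^ 2 - k₁ ^ 2) / (k₂ ^ 2 - q ^ 2)) ^ ((1 : ℝ) / 4) / (k ^ 2 + q ^ 2) =
      2 * (Real.pi / (2 * Real.sqrt 2) - r * (Real.pi / (2 * Real.sqrt 2))) - 0 := by
    refine integral_of_tendsto_nonneg (f := fun q => G (w q ^ ((1 : ℝ) / 4))) hk ?_ ?_ ?_ ?_
    · intro q hq
      have hq0 : 0 < q := hk₁.trans hq.1
      have hn : 0 < q ^ 2 - k₁ ^ 2 := by nlinarith [hq.1]
      have hdn : 0 < k₂ ^ 2 - q ^ 2 := by nlinarith [hq.2]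
      have hw0 : 0 < w q := div_pos hn hdn
      have hw : HasDerivAt w (2 * q * (k₂ ^ 2 - k₁ ^ 2) / (k₂ ^ 2 - q ^ 2) ^ 2) q := by
        have hsq : HasDerivAt (fun q : ℝ => q ^ 2) (2 * q) q := by
          simpa using hasDerivAt_pow 2 q
        refine ((hsq.sub_const (k₁ ^ 2)).div (hsq.const_sub (k₂ ^ 2)) hdn.ne').congr_deriv ?_
        congr 1
        ring
      have hu := hw.rpow_const (p := (1 : ℝ) / 4) (Or.inl hw0.ne')
      refine ((hG _).comp q hu).congr_deriv ?_
      have hw4 := pow4 (w q) hw0.le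
      rw [Real.rpow_sub hw0, Real.rpow_one, div_pow, hr4, hw4]
      change _ = q * (w q) ^ ((1 : ℝ) / 4) / (k ^ 2 + q ^ 2)
      generalize (w q) ^ ((1 : ℝ) / 4) = U
      have hQ : 0 < k ^ 2 + q ^ 2 := by positivity
      have hD : 0 < k₂ ^ 2 - k₁ ^ 2 := by linarith
      have e1 : 1 / (1 + w q) = (k₂ ^ 2 - q ^ 2) / (k₂ ^ 2 - k₁ ^ 2) := by
        have : 1 + w q = (k₂ ^ 2 - k₁ ^ 2) / (k₂ ^ 2 - q ^ 2) := by
          simp only [w]; field_simp; ring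
        rw [this, one_div_div]
      have e2 : 1 / (1 + w q / ((k ^ 2 + k₁ ^ 2) / (k ^ 2 + k₂ ^ 2))) =
          (k ^ 2 + k₁ ^ 2) * (k₂ ^ 2 - q ^ 2) / ((k₂ ^ 2 - k₁ ^ 2) * (k ^ 2 + q ^ 2)) := by
        have : 1 + w q / ((k ^ 2 + k₁ ^ 2) / (k ^ 2 + k₂ ^ 2)) =
            ((k₂ ^ 2 - k₁ ^ 2) * (k ^ 2 + q ^ 2)) / ((k ^ 2 + k₁ ^ 2) * (k₂ ^ 2 - q ^ 2)) := by
          simp only [w]; field_simp; ring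
        rw [this, one_div_div]
      rw [e1, e2]
      simp only [w]
      field_simp
      ring
    · intro q hq
      have hq0 : 0 < q := hk₁.trans hq.1
      have hn : 0 < q ^ 2 - k₁ ^ 2 := by nlinarith [hq.1]
      have hdn : 0 < k₂ ^ 2 - q ^ 2 := by nlinarith [hq.2]
      positivity
    · have hdn : k₂ ^ 2 - k₁ ^ 2 ≠ 0 := by nlinarith
      have hwc : ContinuousAt w k₁ := by
        have c1 : ContinuousAt (fun q : ℝ => q ^ 2 - k₁ ^ 2) k₁ := by fun_prop
        have c2 : ContinuousAt (fun q : ℝ => k₂ ^ 2 - q ^ 2) k₁ := by fun_prop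
        exact c1.div c2 hdn
      have hc : ContinuousAt (fun q => G (w q ^ ((1 : ℝ) / 4))) k₁ :=
        ContinuousAt.comp (g := G) (f := fun q => w q ^ ((1 : ℝ) / 4)) (hG _).continuousAt
          (hwc.rpow_const (p := (1 : ℝ) / 4) (Or.inr (by norm_num)))
      have := hc.tendsto
      have e : G (w k₁ ^ ((1 : ℝ) / 4)) = 0 := by
        have : w k₁ = 0 := by simp [w]
        rw [this, Real.zero_rpow (by norm_num), hG0]
      rw [e] at this
      exact this.mono_left nhdsWithin_le_nhds
    · refine hGtop.comp ((tendsto_rpow_atTop (by norm_num : (0:ℝ) < 1 / 4)).comp ?_)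
      have hnum : Filter.Tendsto (fun q : ℝ => q ^ 2 - k₁ ^ 2) (nhdsWithin k₂ (Set.Iio k₂))
          (nhds (k₂ ^ 2 - k₁ ^ 2)) := by
        have : ContinuousAt (fun q : ℝ => q ^ 2 - k₁ ^ 2) k₂ := by fun_prop
        exact this.tendsto.mono_left nhdsWithin_le_nhds
      have hden : Filter.Tendsto (fun q : ℝ => k₂ ^ 2 - q ^ 2) (nhdsWithin k₂ (Set.Iio k₂))
          (nhdsWithin 0 (Set.Ioi 0)) := by
        refine tendsto_nhdsWithin_iff.2 ⟨?_, ?_⟩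
        · have : ContinuousAt (fun q : ℝ => k₂ ^ 2 - q ^ 2) k₂ := by fun_prop
          have := this.tendsto
          rw [sub_self] at this
          exact this.mono_left nhdsWithin_le_nhds
        · filter_upwards [Ioo_mem_nhdsLT hk] with q hq
          have := hq.1
          have := hq.2
          simp only [Set.mem_Ioi]
          nlinarith
      have hinv := tendsto_inv_nhdsGT_zero.comp hden
      have := hnum.pos_mul_atTop (by nlinarith : 0 < k₂ ^ 2 - k₁ ^ 2) hinv
      exact this
  rw [key]
  have hs0 : 0 < Real.sqrt 2 := by positivity
  have := Real.pi_pos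
  field_simp
  ring
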